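/- Let d, m ≥ 2 be integers, let H be a finite field, and let F be a field extension of H of degree m with |F| ≥ 2md; write n = |F| and δ = 1 − d/n (so δ ≥ 1 − 1/(2m) ≥ 3/4). Let τ and γ be reals with 0 ≤ τ ≤ δ/2 and 0 < γ ≤ δ/8. Let f : F^m → F, suppose there is an m-variate polynomial Q* over F of total degree at most d whose evaluation differs from f on at most τ·n^m points, and let x ∈ F^m satisfy f(x) ≠ Q*(x). Consider the random walk that samples h₀, h'₀ ∈ H^m uniformly, sets x₀ = x, ĥ₀ = ι(h₀), and for i = 1, …, m samples s_{i−1}, s'_{i−1}, t_{i−1}, t'_{i−1} ∈ F and h'_i ∈ H^m uniformly and independently and sets x_i = x_{i−1} + s_{i−1} • ĥ_{i−1} + s'_{i−1} • ι(h'_{i−1}) and ĥ_i = t_{i−1} • ĥ_{i−1} + t'_{i−1} • ι(h'_{i−1}). For 0 ≤ i ≤ m let g_i : F² → F be the parametrized restriction g_i(a, b) = f(x_i + a • ĥ_i + b • ι(h'_i)). Then with probability at least (1 − 4/n)^m − (τ + 2/|H|)/(δ − 2γ) over all the random choices, either (i) min over Q ∈ RM₂(d) of [ (1/2)·𝟙[g₀(0,0)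 ≠ Q(0,0)] + |{p ∈ F² : g₀(p) ≠ Q(p)}|/(2n²) ] is at least γ, or (ii) there exists i ∈ {1, …, m} such that min over Q ∈ RM₂(d) of [ |{t ∈ F : g_i(t, 0) ≠ Q(t, 0)}|/(2n) + |{p ∈ F² : g_i(p) ≠ Q(p)}|/(2n²) ] is at least γ. -/

import Mathlib

open scoped Classical

noncomputable section

/-- Componentwise application of the field inclusion `H ↪ F` to a vector. -/
def iotaV {H F : Type*} [CommSemiring H] [CommSemiring F] [Algebra H F] {m : ℕ}
    (v : Fin m → H) : Fin m → F :=
  fun j => algebraMap H F (v j)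

/-- Extend a `Fin n`-indexed family to a `ℕ`-indexed family by zero. -/
def pad {β : Type*} [Zero β] {n : ℕ} (f : Fin n → β) : ℕ → β :=
  fun i => if h : i < n then f ⟨i, h⟩ else 0

/-- Prepend an element to a `Fin n`-indexed family, yielding a `ℕ`-indexed family. -/
def cons0 {β : Type*} [Zero β] {n : ℕ} (b : β) (f : Fin n → β) : ℕ → β
  | 0 => b
  | (i + 1) => pad f i

/-- The direction vectors `ĥ_i` of the plane-line random walk:
`ĥ₀ = ι(h₀)` and `ĥ_i = t_{i−1} • ĥ_{i−1} + t'_{i−1} • ι(h'_{i−1})`. -/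
def walkH {H F : Type*} [CommSemiring H] [Field F] [Algebra H F] {m : ℕ}
    (h0 : Fin m → H) (h' : ℕ → Fin m → H) (t t' : ℕ → F) : ℕ → (Fin m → F)
  | 0 => iotaV h0
  | (i + 1) => t i • walkH h0 h' t t' i + t' i • iotaV (h' i)

/-- The base points `x_i` of the plane-line random walk:
`x_i = x_{i−1} + s_{i−1} • ĥ_{i−1} + s'_{i−1} • ι(h'_{i−1})`. -/
def walkX {H F : Type*} [CommSemiring H] [Field F] [Algebra H F] {m : ℕ}
    (x0 : Fin m → F) (h0 : Fin m → H) (h' : ℕ → Fin m → H) (s s' t t' : ℕ → F) :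
    ℕ → (Fin m → F)
  | 0 => x0
  | (i + 1) => walkX x0 h0 h' s s' t t' i + s i • walkH h0 h' t t' i + s' i • iotaV (h' i)

/-- The parametrized restriction `g_i(a, b) = f(x_i + a • ĥ_i + b • ι(h'_i))` of `f`
to the `i`-th plane of the walk. -/
def gRest {H F : Type*} [CommSemiring H] [Field F] [Algebra H F] {m : ℕ}
    (f : (Fin m → F) → F) (x0 : Fin m → F) (h0 : Fin m → H) (h' : ℕ → Fin m → H)
    (s s' t t' : ℕ → F) (i : ℕ) : F × F → F :=
  fun ab => f (walkX x0 h0 h' s s' t t' i + ab.1 • walkH h0 h' t t' i + ab.2 • iotaV (h' i))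

/-- The parametrized restriction `g_i` determined by a sample
`ω ∈ ((H^m) × F⁴)^k` of the walk (with fixed `x₀ ∈ F^m`, `h₀, h'₀ ∈ H^m`), where
`ω i = (h'_{i+1}, s_i, s'_i, t_i, t'_i)`. -/
def walkG {H F : Type*} [CommSemiring H] [Field F] [Algebra H F] {m k : ℕ}
    (f : (Fin m → F) → F) (x0 : Fin m → F) (h0 h'0 : Fin m → H)
    (ω : Fin k → ((Fin m → H) × (F × F × F × F))) (i : ℕ) : F × F → F :=
  gRest f x0 h0 (cons0 h'0 (fun j => (ω j).1))
    (pad (fun j => (ω j).2.1)) (pad (fun j => (ω j).2.2.1))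
    (pad (fun j => (ω j).2.2.2.1)) (pad (fun j => (ω j).2.2.2.2)) i

/-- The bivariate Reed–Muller code: evaluation tables on `F²` of bivariate
polynomials over `F` of total degree at most `d`. -/
def RM2 (F : Type*) [CommSemiring F] (d : ℕ) : Set ((F × F) → F) :=
  {g | ∃ Q : MvPolynomial (Fin 2) F, Q.totalDegree ≤ d ∧
        ∀ p : F × F, g p = MvPolynomial.eval ![p.1, p.2] Q}

/-!
Suppose no plane of the walk is rejected. Then every plane carries a codeword close to `f`, which
at the origin of plane `0` agrees with `f` and hence differs from `Q*`. Leaving a plane along a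
random line, two points of which are independent, Chebyshev's inequality shows that, except with
probability at most `2 / |F|`, the wrong codeword still differs from `Q*` on that line and is still
close to `f` there. Since a line supports at most one nearby codeword, the codeword of the next
plane is wrong too. So after `m` steps the last plane carries a codeword other than `Q*` close to
`f`, which forces `f` to differ from `Q*` on a fraction of at least `δ - 2γ` of that plane. But
each point of the last plane is uniform once the `m` directions `h'_j` are linearly independent,
which fails with probability at most `2 / |H|`, so Markov's inequality makes this unlikely.
-/

open scoped BigOperators

section UniformProbability

variable {Ω Ω' : Type*} [Fintype Ω] [Fintype Ω']

/-- The probability of the event `p` for a uniformly random element of the finite type `Ω`,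
with value `0` when `Ω` is empty. -/
def prob (p : Ω → Prop) : ℝ := 𝔼 ω, if p ω then 1 else 0

lemma prob_eq_card_div_card (p : Ω → Prop) [DecidablePred p] :
    prob p = (Finset.univ.filter p).card / Fintype.card Ω := by
  rw [prob, Fintype.expect_eq_sum_div_card]
  congr 1
  convert Finset.sum_boole p Finset.univ

lemma card_filter_eq_prob_mul (p : Ω → Prop) [DecidablePred p] :
    ((Finset.univ.filter p).card : ℝ) = prob p * Fintype.card Ω := by
  rcases isEmpty_or_nonempty Ω with hΩ | hΩ
  · simp
  · rw [prob_eq_card_div_card, div_mul_cancel₀ _ (Nat.cast_ne_zero.2 Fintype.card_ne_zero)]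

lemma prob_nonneg (p : Ω → Prop) : 0 ≤ prob p :=
  Finset.expect_nonneg fun ω _ => by split_ifs <;> norm_num

lemma prob_mono {p q : Ω → Prop} (h : ∀ ω, p ω → q ω) : prob p ≤ prob q :=
  Finset.expect_le_expect fun ω _ => by
    by_cases hp : p ω
    · simp [hp, h ω hp]
    · simp only [hp, if_false]; split_ifs <;> norm_num

lemma prob_or_le (p q : Ω → Prop) : prob (fun ω => p ω ∨ q ω) ≤ prob p + prob q := by
  rw [prob, prob, prob, ← Finset.expect_add_distrib]
  exact Finset.expect_le_expect fun ω _ => by by_cases hp : p ω <;> by_cases hq : q ω <;> simp [*]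

lemma prob_exists_le {ι : Type*} [Fintype ι] (p : ι → Ω → Prop) :
    prob (fun ω => ∃ i, p i ω) ≤ ∑ i, prob (p i) := by
  simp only [prob]
  rw [← Finset.expect_sum_comm]
  refine Finset.expect_le_expect fun ω _ => ?_
  have hnonneg : ∀ i ∈ Finset.univ, (0 : ℝ) ≤ if p i ω then 1 else 0 :=
    fun i _ => by split_ifs <;> norm_num
  split_ifs with hp
  · obtain ⟨i, hi⟩ := hp
    simpa [hi] using Finset.single_le_sum hnonneg (Finset.mem_univ i)
  · exact Finset.sum_nonneg hnonneg

lemma prob_false : prob (fun _ : Ω => False) = 0 := by simp [prob]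

lemma prob_add_prob_not [Nonempty Ω] (p : Ω → Prop) : prob p + prob (fun ω => ¬ p ω) = 1 := by
  rw [prob, prob, ← Finset.expect_add_distrib]
  calc _ = 𝔼 _ω : Ω, (1 : ℝ) :=
        Finset.expect_congr rfl fun ω _ => by by_cases hp : p ω <;> simp [hp]
    _ = 1 := Fintype.expect_const 1

lemma prob_comp_bijective {e : Ω → Ω'} (he : Function.Bijective e) (p : Ω' → Prop) :
    prob (fun ω => p (e ω)) = prob p :=
  Fintype.expect_bijective e he _ _ fun _ => rfl

lemma prob_const_add [AddGroup Ω] (a : Ω) (p : Ω → Prop) :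
    prob (fun ω => p (a + ω)) = prob p :=
  prob_comp_bijective (Equiv.addLeft a).bijective p

lemma prob_comp_fst [Nonempty Ω'] (p : Ω → Prop) : prob (fun z : Ω × Ω' => p z.1) = prob p := by
  rw [prob, ← Finset.univ_product_univ, Finset.expect_product]
  exact Finset.expect_congr rfl fun ω _ => Fintype.expect_const (if p ω then 1 else 0)

lemma prob_prodAssoc {α β γ : Type*} [Fintype α] [Fintype β] [Fintype γ]
    (p : (α × β) × γ → Prop) :
    prob (fun z : α × β × γ => p ((z.1, z.2.1), z.2.2)) = prob p :=
  prob_comp_bijective (Equiv.prodAssoc α β γ).symm.bijective p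

lemma expect_prob_comm (p : Ω → Ω' → Prop) :
    𝔼 ω, prob (p ω) = 𝔼 ω', prob (fun ω => p ω ω') :=
  Finset.expect_comm _ _ _

lemma prob_ne_triangle {β : Type*} (f g h : Ω → β) :
    prob (fun ω => f ω ≠ h ω) ≤ prob (fun ω => f ω ≠ g ω) + prob (fun ω => g ω ≠ h ω) :=
  (prob_mono fun ω hfh => (hfh.ne_or_ne (g ω)).imp_right Ne.symm).trans (prob_or_le _ _)

lemma prob_le_expect_div {X : Ω → ℝ} (hX : ∀ ω, 0 ≤ X ω) {r : ℝ} (hr : 0 < r) :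
    prob (fun ω => r ≤ X ω) ≤ (𝔼 ω, X ω) / r := by
  rw [prob, Finset.expect_div]
  refine Finset.expect_le_expect fun ω _ => ?_
  split_ifs with hω
  · rwa [one_le_div hr]
  · exact div_nonneg (hX ω) hr.le

lemma prob_le_abs_le_expect_sq_div (X : Ω → ℝ) {r : ℝ} (hr : 0 < r) :
    prob (fun ω => r ≤ |X ω|) ≤ (𝔼 ω, X ω ^ 2) / r ^ 2 :=
  (prob_mono fun ω hω => (sq_abs (X ω)).symm ▸ pow_le_pow_left₀ hr.le hω 2).trans
    (prob_le_expect_div (fun ω => sq_nonneg (X ω)) (pow_pos hr 2))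

lemma expect_sq_indicator_sub_prob [Nonempty Ω] (p : Ω → Prop) :
    𝔼 ω, ((if p ω then 1 else 0) - prob p) ^ 2 = prob p * (1 - prob p) := by
  have hexpand (ω : Ω) : ((if p ω then (1 : ℝ) else 0) - prob p) ^ 2 =
      (1 - 2 * prob p) * (if p ω then 1 else 0) + prob p ^ 2 := by
    split_ifs <;> ring
  simp only [hexpand, Finset.expect_add_distrib, ← Finset.mul_expect, Fintype.expect_const]
  rw [← prob]
  ring

-- Averaging over `ω` first makes every translation by `e q` invisible.
lemma prob_le_of_forall_translate [AddCommGroup Ω] [Nonempty Ω'] (e : Ω' → Ω) {p : Ω → Prop}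
    {c : ℝ} (h : ∀ ω, prob (fun q => p (ω + e q)) ≤ c) : prob p ≤ c :=
  calc prob p = 𝔼 _q : Ω', prob p := (Fintype.expect_const _).symm
    _ = 𝔼 q, prob (fun ω => p (ω + e q)) :=
      Finset.expect_congr rfl fun q _ =>
        (prob_comp_bijective (Equiv.addRight (e q)).bijective p).symm
    _ = 𝔼 ω, prob (fun q => p (ω + e q)) := expect_prob_comm _
    _ ≤ c := Finset.expect_le Finset.univ_nonempty fun ω _ => h ω

end UniformProbability

section RandomLine

variable {F V : Type*} [Field F] [AddCommGroup V] [Fintype V] [Module F V]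

lemma expect_line_mul_line {a b : F} (hab : a ≠ b) (f g : V → ℝ) :
    𝔼 l : V × V, f (l.1 + a • l.2) * g (l.1 + b • l.2) = (𝔼 p, f p) * 𝔼 p, g p := by
  have hinj : Function.Injective fun l : V × V => (l.1 + a • l.2, l.1 + b • l.2) := by
    rintro ⟨x, u⟩ ⟨y, v⟩ h
    obtain ⟨ha, hb⟩ : x + a • u = y + a • v ∧ x + b • u = y + b • v := Prod.mk.inj h
    have huv : (a - b) • u = (a - b) • v := by
      rw [sub_smul, sub_smul, ← add_sub_add_left_eq_sub _ _ x, ha, hb, add_sub_add_left_eq_sub]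
    obtain rfl : u = v := smul_right_injective V (sub_ne_zero.2 hab) huv
    rw [add_right_cancel ha]
  rw [Fintype.expect_bijective _ (Finite.injective_iff_bijective.1 hinj) _
    (fun z : V × V => f z.1 * g z.2) fun _ => rfl, ← Finset.univ_product_univ,
    Finset.expect_product, Finset.expect_mul_expect]

lemma expect_comp_line (a : F) (f : V → ℝ) : 𝔼 l : V × V, f (l.1 + a • l.2) = 𝔼 p, f p := by
  rw [← Finset.univ_product_univ, Finset.expect_product, Finset.expect_comm]
  calc 𝔼 u : V, 𝔼 x : V, f (x + a • u) = 𝔼 _u : V, 𝔼 p, f p :=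
        Finset.expect_congr rfl fun u _ =>
          Fintype.expect_equiv (Equiv.addRight (a • u)) _ _ fun _ => rfl
    _ = 𝔼 p, f p := Fintype.expect_const _

variable [Fintype F]

-- The points of a random line are pairwise independent, so only the diagonal terms survive.
lemma expect_sq_expect_line {f : V → ℝ} (hf : 𝔼 p, f p = 0) :
    𝔼 l : V × V, (𝔼 a : F, f (l.1 + a • l.2)) ^ 2 = (𝔼 p, f p ^ 2) / Fintype.card F := by
  have hpair (a b : F) : 𝔼 l : V × V, f (l.1 + a • l.2) * f (l.1 + b • l.2) =
      if a = b then 𝔼 p, f p ^ 2 else 0 := by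
    split_ifs with hab
    · subst hab
      simp only [← sq]
      exact expect_comp_line a fun p => f p ^ 2
    · rw [expect_line_mul_line hab, hf, zero_mul]
  calc 𝔼 l : V × V, (𝔼 a : F, f (l.1 + a • l.2)) ^ 2
      = 𝔼 l : V × V, 𝔼 a : F, 𝔼 b : F, f (l.1 + a • l.2) * f (l.1 + b • l.2) := by
        simp only [sq, Finset.expect_mul_expect]
    _ = 𝔼 a : F, 𝔼 b : F, 𝔼 l : V × V, f (l.1 + a • l.2) * f (l.1 + b • l.2) := by
        rw [Finset.expect_comm]
        exact Finset.expect_congr rfl fun a _ => Finset.expect_comm _ _ _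
    _ = (𝔼 p, f p ^ 2) / Fintype.card F := by
        simp only [hpair, Fintype.expect_ite_eq, Fintype.expect_const]
        rw [NNRat.smul_def, NNRat.cast_inv, NNRat.cast_natCast, inv_mul_eq_div]

lemma prob_line_deviation_le (A : V → Prop) {ε : ℝ} (hε : 0 < ε) :
    prob (fun l : V × V => ε ≤ |prob (fun a : F => A (l.1 + a • l.2)) - prob A|) ≤
      prob A * (1 - prob A) / (Fintype.card F * ε ^ 2) := by
  let f : V → ℝ := fun p => (if A p then 1 else 0) - prob A
  have hf : 𝔼 p, f p = 0 := by
    rw [Finset.expect_sub_distrib, Fintype.expect_const, ← prob, sub_self]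
  have hline (l : V × V) : prob (fun a : F => A (l.1 + a • l.2)) - prob A =
      𝔼 a : F, f (l.1 + a • l.2) := by
    rw [Finset.expect_sub_distrib, Fintype.expect_const, ← prob]
  simp only [hline]
  refine (prob_le_abs_le_expect_sq_div _ hε).trans_eq ?_
  rw [expect_sq_expect_line hf, expect_sq_indicator_sub_prob, div_div]

lemma prob_line_dense_le {A : V → Prop} {r : ℝ} (hr : 0 < r) (hA : prob A ≤ r / 4) :
    prob (fun l : V × V => 3 / 4 * r ≤ prob (fun a : F => A (l.1 + a • l.2))) ≤
      1 / (r * Fintype.card F) := by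
  calc prob (fun l : V × V => 3 / 4 * r ≤ prob (fun a : F => A (l.1 + a • l.2)))
      ≤ prob (fun l : V × V => r / 2 ≤ |prob (fun a : F => A (l.1 + a • l.2)) - prob A|) :=
        prob_mono fun l hl => le_abs.2 (.inl (by linarith))
    _ ≤ prob A * (1 - prob A) / (Fintype.card F * (r / 2) ^ 2) :=
        prob_line_deviation_le A (half_pos hr)
    _ ≤ (r / 4) / (Fintype.card F * (r / 2) ^ 2) := by
        gcongr
        nlinarith [prob_nonneg A]
    _ = 1 / (r * Fintype.card F) := by field_simp; norm_num

lemma prob_line_disjoint_le {A : V → Prop} {r : ℝ} (hr : 0 < r) (hA : r ≤ prob A) :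
    prob (fun l : V × V => ∀ a : F, ¬ A (l.1 + a • l.2)) ≤ (1 - r) / (r * Fintype.card F) := by
  have hA0 : 0 < prob A := hr.trans_le hA
  calc prob (fun l : V × V => ∀ a : F, ¬ A (l.1 + a • l.2))
      ≤ prob (fun l : V × V => prob A ≤ |prob (fun a : F => A (l.1 + a • l.2)) - prob A|) :=
        prob_mono fun l hl => by simp [prob, hl, le_abs_self]
    _ ≤ prob A * (1 - prob A) / (Fintype.card F * prob A ^ 2) := prob_line_deviation_le A hA0
    _ = (1 / prob A - 1) / Fintype.card F := by field_simp
    _ ≤ (1 / r - 1) / Fintype.card F := by gcongr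
    _ = (1 - r) / (r * Fintype.card F) := by field_simp

end RandomLine

section ReedMuller

open MvPolynomial

lemma totalDegree_aeval_le_of_forall_le_one {R σ τ : Type*} [CommSemiring R]
    {L : σ → MvPolynomial τ R} (hL : ∀ j, (L j).totalDegree ≤ 1) (Q : MvPolynomial σ R) :
    (aeval L Q).totalDegree ≤ Q.totalDegree := by
  rw [aeval_def, eval₂_eq, algebraMap_eq]
  refine totalDegree_finsetSum_le fun s hs => ?_
  calc (C (coeff s Q) * ∏ i ∈ s.support, L i ^ s i).totalDegree
      ≤ 0 + (∏ i ∈ s.support, L i ^ s i).totalDegree :=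
        (totalDegree_mul _ _).trans_eq (by rw [totalDegree_C])
    _ ≤ ∑ i ∈ s.support, s i := by
        rw [zero_add]
        refine (totalDegree_finsetProd _ _).trans (Finset.sum_le_sum fun i _ => ?_)
        exact (totalDegree_pow _ _).trans (mul_le_of_le_one_right' (hL i))
    _ ≤ Q.totalDegree := le_totalDegree hs

lemma eval_plane_mem_RM2 {R : Type*} [CommSemiring R] {k d : ℕ} {Q : MvPolynomial (Fin k) R}
    (hQ : Q.totalDegree ≤ d) (x u v : Fin k → R) :
    (fun p : R × R => eval (x + p.1 • u + p.2 • v) Q) ∈ RM2 R d := by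
  let L : Fin k → MvPolynomial (Fin 2) R := fun j => C (x j) + X 0 * C (u j) + X 1 * C (v j)
  have hX (i : Fin 2) (r : R) : (X i * C r : MvPolynomial (Fin 2) R).totalDegree ≤ 1 := by
    rw [mul_comm, C_mul_X_eq_monomial]
    exact (totalDegree_monomial_le _ _).trans (by simp)
  have hL (j : Fin k) : (L j).totalDegree ≤ 1 :=
    (totalDegree_add _ _).trans <| max_le
      ((totalDegree_add _ _).trans <| max_le ((totalDegree_C _).trans_le zero_le_one) (hX 0 _))
      (hX 1 _)
  refine ⟨aeval L Q, (totalDegree_aeval_le_of_forall_le_one hL Q).trans hQ, fun p => ?_⟩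
  rw [aeval_def, eval₂_comp_left (eval ![p.1, p.2])]
  refine congrArg₂ (fun φ y => eval₂ φ y Q) ?_ ?_
  · ext r
    simp
  · funext j
    simp [L]

lemma zero_mem_RM2 (R : Type*) [CommSemiring R] (d : ℕ) : 0 ∈ RM2 R d :=
  ⟨0, by simp, fun _ => by simp⟩

/-- The point `(s + a t, s' + a t')` with parameter `a` on the line of `F²` with
parameters `q = (s, s', t, t')`. -/
def linePoint {R : Type*} [Semiring R] (q : R × R × R × R) (a : R) : R × R :=
  (q.1, q.2.1) + a • q.2.2

lemma comp_linePoint_mem_RM2 {R : Type*} [CommSemiring R] {d : ℕ} {P : R × R → R}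
    (hP : P ∈ RM2 R d) (q : R × R × R × R) : (fun p => P (linePoint q p.1)) ∈ RM2 R d := by
  obtain ⟨Q, hQ, hPQ⟩ := hP
  obtain ⟨Q', hQ', hQQ'⟩ := eval_plane_mem_RM2 hQ ![q.1, q.2.1] ![q.2.2.1, q.2.2.2] 0
  refine ⟨Q', hQ', fun p => ?_⟩
  rw [← hQQ']
  simp [hPQ, linePoint]

lemma prob_eval_eq_zero_le {R : Type*} [CommRing R] [IsDomain R] [Fintype R] {k : ℕ}
    {Q : MvPolynomial (Fin k) R} (hQ : Q ≠ 0) :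
    prob (fun y => eval y Q = 0) ≤ Q.totalDegree / Fintype.card R := by
  have hSZ := NNRat.cast_le (K := ℝ).2 (schwartz_zippel_totalDegree hQ Finset.univ)
  push_cast at hSZ
  rw [Fintype.piFinset_univ] at hSZ
  rw [prob_eq_card_div_card]
  simpa using hSZ

lemma card_ne_div_eq_half_prob {α β : Type*} [Fintype α] (g P : α × α → β) :
    ((Finset.univ.filter (fun p : α × α => g p ≠ P p)).card : ℝ)
      / (2 * (Fintype.card α : ℝ) ^ 2) = prob (fun p => g p ≠ P p) / 2 := by
  rw [prob_eq_card_div_card, Fintype.card_prod, div_div]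
  push_cast
  ring

/-- The relative minimum distance `1 - d / |F|` that the Schwartz–Zippel lemma guarantees for the
Reed–Muller codes of degree `d` over `F`. -/
def rmDist (F : Type*) [Fintype F] (d : ℕ) : ℝ := 1 - d / Fintype.card F

lemma rmDist_le_one {F : Type*} [Fintype F] {d : ℕ} : rmDist F d ≤ 1 :=
  sub_le_self _ (by positivity)

lemma two_thirds_le_rmDist {F : Type*} [Fintype F] {d : ℕ} (hd : 3 * d ≤ Fintype.card F) :
    2 / 3 ≤ rmDist F d := by
  have hd' : (3 * d : ℝ) ≤ Fintype.card F := by exact_mod_cast hd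
  have hratio : (d : ℝ) / Fintype.card F ≤ 1 / 3 :=
    div_le_of_le_mul₀ (Nat.cast_nonneg _) (by norm_num) (by linarith)
  rw [rmDist]
  linarith

variable {F : Type*} [Field F] [Fintype F] {d : ℕ}

lemma rmDist_le_prob_ne {P P' : F × F → F} (hP : P ∈ RM2 F d) (hP' : P' ∈ RM2 F d)
    (hne : P ≠ P') : rmDist F d ≤ prob (fun p => P p ≠ P' p) := by
  obtain ⟨Q, hQ, hPQ⟩ := hP
  obtain ⟨Q', hQ', hPQ'⟩ := hP'
  have hQQ' : Q - Q' ≠ 0 := fun h => hne <| funext fun p => by rw [hPQ, hPQ', sub_eq_zero.1 h]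
  have hdeg : (Q - Q').totalDegree ≤ d := (totalDegree_sub _ _).trans (max_le hQ hQ')
  have hzero (p : F × F) : P p = P' p ↔ eval ((finTwoArrowEquiv F).symm p) (Q - Q') = 0 := by
    rw [hPQ, hPQ', ← sub_eq_zero, ← map_sub]
    rfl
  have hagree : prob (fun p => P p = P' p) ≤ d / Fintype.card F := by
    simp only [hzero]
    rw [prob_comp_bijective (finTwoArrowEquiv F).symm.bijective fun y => eval y (Q - Q') = 0]
    exact (prob_eval_eq_zero_le hQQ').trans (by gcongr)
  have hsum := prob_add_prob_not fun p => P p = P' p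
  rw [rmDist]
  linarith

lemma eq_of_prob_ne_lt {g P P' : F × F → F} (hP : P ∈ RM2 F d) (hP' : P' ∈ RM2 F d) {ρ ρ' : ℝ}
    (hgP : prob (fun p => g p ≠ P p) < ρ) (hgP' : prob (fun p => g p ≠ P' p) < ρ')
    (hρ : ρ + ρ' ≤ rmDist F d) : P = P' := by
  by_contra hne
  have hdist := rmDist_le_prob_ne hP hP' hne
  have htri := prob_ne_triangle P g P'
  simp only [ne_comm (a := P _) (b := g _)] at htri
  linarith

/-- `P` is a codeword of degree `d` within relative distance `ρ` of the table `g` which differs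
from the reference table `c`. -/
structure IsWrongDecoding (d : ℕ) (ρ : ℝ) (g c P : F × F → F) : Prop where
  mem : P ∈ RM2 F d
  close : prob (fun p => g p ≠ P p) < ρ
  ne : P ≠ c

lemma IsWrongDecoding.rmDist_sub_le {ρ : ℝ} {g c P : F × F → F} (hP : IsWrongDecoding d ρ g c P)
    (hc : c ∈ RM2 F d) : rmDist F d - ρ ≤ prob (fun p => g p ≠ c p) := by
  have hdist := rmDist_le_prob_ne hP.mem hc hP.ne
  have htri := prob_ne_triangle P g c
  have hclose := hP.close
  simp only [ne_comm (a := P _) (b := g _)] at htri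
  linarith

/-- The line with parameters `q` hides a wrong decoding `P` of `g`: on it `P` either coincides
with the reference `c` or is too far from `g` to be recognised as the nearest codeword. -/
def IsHidingLine (d : ℕ) (ρ : ℝ) (g c : F × F → F) (q : F × F × F × F) : Prop :=
  ∃ P, IsWrongDecoding d ρ g c P ∧ ((∀ a, P (linePoint q a) = c (linePoint q a)) ∨
    rmDist F d - ρ ≤ prob (fun a => g (linePoint q a) ≠ P (linePoint q a)))

lemma prob_isHidingLine_le {ρ : ℝ} {g c : F × F → F} (hc : c ∈ RM2 F d)
    (hδ : 2 / 3 ≤ rmDist F d) (hρ : ρ ≤ rmDist F d / 4) :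
    prob (IsHidingLine d ρ g c) ≤ 2 / Fintype.card F := by
  by_cases hex : ∃ P, IsWrongDecoding d ρ g c P
  · obtain ⟨P, hP⟩ := hex
    have hδ0 : 0 < rmDist F d := by linarith
    have hunique {P' : F × F → F} (hP' : IsWrongDecoding d ρ g c P') : P' = P :=
      eq_of_prob_ne_lt hP'.mem hP.mem hP'.close hP.close (by linarith)
    have hcoincide := prob_line_disjoint_le (F := F) hδ0 (rmDist_le_prob_ne hP.mem hc hP.ne)
    have hfar := prob_line_dense_le (F := F) hδ0 (hP.close.le.trans hρ)
    rw [← prob_prodAssoc] at hcoincide hfar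
    calc prob (IsHidingLine d ρ g c)
        ≤ prob (fun q : F × F × F × F => (∀ a, ¬ P (linePoint q a) ≠ c (linePoint q a)) ∨
            3 / 4 * rmDist F d ≤ prob (fun a => g (linePoint q a) ≠ P (linePoint q a))) := by
          refine prob_mono fun q hq => ?_
          obtain ⟨P', hP', hline⟩ := hq
          obtain rfl := hunique hP'
          exact hline.imp (fun h a => not_not.2 (h a)) (le_trans (by linarith))
      _ ≤ (1 - rmDist F d) / (rmDist F d * Fintype.card F) +
            1 / (rmDist F d * Fintype.card F) :=
          (prob_or_le _ _).trans (add_le_add hcoincide hfar)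
      _ ≤ 2 / Fintype.card F := by
          have hF : (0 : ℝ) < Fintype.card F := Nat.cast_pos.2 Fintype.card_pos
          rw [← add_div, div_le_div_iff₀ (by positivity) hF]
          nlinarith
  · have hnone (q : F × F × F × F) : ¬ IsHidingLine d ρ g c q := fun ⟨P, hP, _⟩ => hex ⟨P, hP⟩
    exact (prob_mono hnone).trans (prob_false.trans_le (by positivity))

lemma eq_on_axis_of_prob_ne_lt {P P' : F × F → F} (hP : P ∈ RM2 F d) (hP' : P' ∈ RM2 F d)
    (q : F × F × F × F)
    (h : prob (fun a => P (linePoint q a) ≠ P' (a, 0)) < rmDist F d) (a : F) :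
    P (linePoint q a) = P' (a, 0) := by
  have haxis : (fun p => P' (p.1, 0)) ∈ RM2 F d := by
    simpa [linePoint] using comp_linePoint_mem_RM2 hP' (0, 0, 1, 0)
  by_contra hne
  refine h.not_ge ?_
  rw [← prob_comp_fst (Ω' := F)]
  exact rmDist_le_prob_ne (comp_linePoint_mem_RM2 hP q) haxis fun heq => hne (congrFun heq (a, 0))

-- A line that is not hiding makes `P'` inherit on its axis the disagreement of `P` with `c`.
lemma IsWrongDecoding.ne_of_not_isHidingLine {ρ : ℝ} {g c P g' c' P' : F × F → F}
    (hP : IsWrongDecoding d ρ g c P) {q : F × F × F × F} (hq : ¬ IsHidingLine d ρ g c q)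
    (hg : ∀ a, g' (a, 0) = g (linePoint q a)) (hc : ∀ a, c' (a, 0) = c (linePoint q a))
    (hP' : P' ∈ RM2 F d) (hgP' : prob (fun a => g' (a, 0) ≠ P' (a, 0)) < ρ) : P' ≠ c' := by
  rintro rfl
  obtain ⟨hdiffer, hnear⟩ := not_or.1 (not_and.1 (not_exists.1 hq P) hP)
  refine hdiffer fun a => (eq_on_axis_of_prob_ne_lt hP.mem hP' q ?_ a).trans (hc a)
  have htri := prob_ne_triangle (fun a => P (linePoint q a)) (fun a => g (linePoint q a))
    (fun a => P' (a, 0))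
  simp only [hg, ne_comm (a := P _) (b := g _)] at hgP' htri
  linarith [not_le.1 hnear]

/-- The distance of `g` from the Reed–Muller code of degree `d` in which the origin carries half of
the weight. -/
def pointDist (d : ℕ) (g : F × F → F) : ℝ :=
  sInf {r : ℝ | ∃ P ∈ RM2 F d,
    r = (1 / 2) * (if g (0, 0) ≠ P (0, 0) then (1 : ℝ) else 0)
      + ((Finset.univ.filter (fun p : F × F => g p ≠ P p)).card : ℝ)
        / (2 * (Fintype.card F : ℝ) ^ 2)}

/-- The distance of `g` from the Reed–Muller code of degree `d` in which the axis `F × {0}` carries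
half of the weight. -/
def lineDist (d : ℕ) (g : F × F → F) : ℝ :=
  sInf {r : ℝ | ∃ P ∈ RM2 F d,
    r = ((Finset.univ.filter (fun a : F => g (a, 0) ≠ P (a, 0))).card : ℝ)
        / (2 * (Fintype.card F : ℝ))
      + ((Finset.univ.filter (fun p : F × F => g p ≠ P p)).card : ℝ)
        / (2 * (Fintype.card F : ℝ) ^ 2)}

lemma exists_close_of_pointDist_lt {g : F × F → F} {γ : ℝ} (hγ : γ ≤ 1 / 2)
    (h : pointDist d g < γ) :
    ∃ P ∈ RM2 F d, prob (fun p => g p ≠ P p) < 2 * γ ∧ g (0, 0) = P (0, 0) := by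
  obtain ⟨_, ⟨P, hP, rfl⟩, hr⟩ := exists_lt_of_csInf_lt (by exact ⟨_, 0, zero_mem_RM2 F d, rfl⟩) h
  have hnonneg := prob_nonneg fun p => g p ≠ P p
  rw [card_ne_div_eq_half_prob] at hr
  split_ifs at hr with h0
  · linarith
  · exact ⟨P, hP, by linarith, not_not.1 h0⟩

lemma exists_close_of_lineDist_lt {g : F × F → F} {γ : ℝ} (h : lineDist d g < γ) :
    ∃ P ∈ RM2 F d, prob (fun p => g p ≠ P p) < 2 * γ ∧
      prob (fun a => g (a, 0) ≠ P (a, 0)) < 2 * γ := by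
  obtain ⟨_, ⟨P, hP, rfl⟩, hr⟩ := exists_lt_of_csInf_lt (by exact ⟨_, 0, zero_mem_RM2 F d, rfl⟩) h
  have hplane := prob_nonneg fun p => g p ≠ P p
  have hline := prob_nonneg fun a => g (a, 0) ≠ P (a, 0)
  rw [card_ne_div_eq_half_prob, mul_comm 2 (Fintype.card F : ℝ), ← div_div,
    ← prob_eq_card_div_card] at hr
  exact ⟨P, hP, by linarith, by linarith⟩

end ReedMuller

section RandomVectors

lemma one_sub_sum_le_prod_one_sub {ι : Type*} {s : Finset ι} {f : ι → ℝ}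
    (hf : ∀ i ∈ s, f i ∈ Set.Icc 0 1) : 1 - ∑ i ∈ s, f i ≤ ∏ i ∈ s, (1 - f i) := by
  induction s using Finset.cons_induction with
  | empty => simp
  | cons i s hi ih =>
    have hi0 : 0 ≤ f i := (hf i (Finset.mem_cons_self i s)).1
    have hs : ∀ j ∈ s, f j ∈ Set.Icc 0 1 := fun j hj => hf j (Finset.mem_cons_of_mem hj)
    have hprod : ∏ j ∈ s, (1 - f j) ≤ 1 := Finset.prod_le_one
      (fun j hj => sub_nonneg.2 (hs j hj).2) fun j hj => sub_le_self _ (hs j hj).1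
    rw [Finset.sum_cons, Finset.prod_cons]
    nlinarith [ih hs]

variable {K V : Type*} [Field K] [Fintype K] [AddCommGroup V] [Module K V] [Fintype V] {k : ℕ}

lemma prob_linearIndependent (hk : k ≤ Module.finrank K V) :
    prob (fun v : Fin k → V => LinearIndependent K v) =
      ∏ i ∈ Finset.range k, (1 - (Fintype.card K : ℝ) ^ i / Fintype.card V) := by
  have hV : Fintype.card V = Fintype.card K ^ Module.finrank K V := Module.card_eq_pow_finrank
  have hV0 : (Fintype.card V : ℝ) ≠ 0 := Nat.cast_ne_zero.2 Fintype.card_ne_zero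
  have hfactor (i : ℕ) (hi : i ∈ Finset.range k) :
      ((Fintype.card K ^ Module.finrank K V - Fintype.card K ^ i : ℕ) : ℝ) / Fintype.card V =
        1 - (Fintype.card K : ℝ) ^ i / Fintype.card V := by
    have hi' : i ≤ Module.finrank K V := (Finset.mem_range.1 hi).le.trans hk
    rw [Nat.cast_sub (Nat.pow_le_pow_right Fintype.card_pos hi'), ← hV, sub_div, div_self hV0]
    push_cast
    rfl
  rw [prob_eq_card_div_card, ← Fintype.card_subtype, ← Nat.card_eq_fintype_card,
    card_linearIndependent hk, Fintype.card_fun, Fintype.card_fin,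
    ← Finset.prod_range fun i => Fintype.card K ^ Module.finrank K V - Fintype.card K ^ i,
    ← Finset.prod_congr rfl hfactor, Finset.prod_div_distrib, Finset.prod_const, Finset.card_range]
  push_cast
  rfl

lemma prob_not_linearIndependent_le (hk : k ≤ Module.finrank K V) :
    prob (fun v : Fin k → V => ¬ LinearIndependent K v) ≤ 2 / Fintype.card K := by
  have hK : (2 : ℝ) ≤ Fintype.card K := by exact_mod_cast Fintype.one_lt_card (α := K)
  have hV : (Fintype.card V : ℝ) = Fintype.card K ^ Module.finrank K V := by
    exact_mod_cast Module.card_eq_pow_finrank (K := K) (V := V)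
  have hV0 : (0 : ℝ) < Fintype.card V := Nat.cast_pos.2 Fintype.card_pos
  have hpow (i : ℕ) (hi : i ≤ k) : (Fintype.card K : ℝ) ^ i ≤ Fintype.card V :=
    hV ▸ pow_le_pow_right₀ (by linarith) (hi.trans hk)
  have hunit : ∀ i ∈ Finset.range k,
      (Fintype.card K : ℝ) ^ i / Fintype.card V ∈ Set.Icc (0 : ℝ) 1 := fun i hi =>
    ⟨by positivity, div_le_one_of_le₀ (hpow i (Finset.mem_range.1 hi).le) hV0.le⟩
  have hgeom : ∑ i ∈ Finset.range k, (Fintype.card K : ℝ) ^ i / Fintype.card V ≤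
      2 / Fintype.card K := by
    rw [← Finset.sum_div, geom_sum_eq (by linarith), div_div,
      div_le_div_iff₀ (mul_pos (by linarith) hV0) (by linarith)]
    nlinarith [hpow k le_rfl]
  have hprod := one_sub_sum_le_prod_one_sub hunit
  rw [← prob_linearIndependent hk] at hprod
  linarith [prob_add_prob_not fun v : Fin k → V => LinearIndependent K v]

lemma bijective_sum_smul_iotaV {H F : Type*} [Field H] [Field F] [Finite F] [Algebra H F] {m : ℕ}
    {h : Fin m → Fin m → H} (hli : LinearIndependent H h) :
    Function.Bijective fun q : Fin m → F => ∑ j, q j • iotaV (F := F) (h j) := by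
  refine Finite.injective_iff_bijective.1 ?_
  have hunit : IsUnit ((Matrix.of h).map (algebraMap H F)) :=
    (Matrix.linearIndependent_rows_iff_isUnit.1 hli).map (algebraMap H F).mapMatrix
  convert Matrix.vecMul_injective_of_isUnit hunit using 2 with q
  funext k
  simp [Matrix.vecMul, dotProduct, iotaV]

end RandomVectors

section Walk

lemma pad_val {β : Type*} [Zero β] {n : ℕ} (f : Fin n → β) (i : Fin n) : pad f i = f i := by
  simp [pad]

/-- The sample space `(H^m)² × (H^m × F⁴)^m` of the walk: the two initial directions `h₀, h'₀`
and then, for each step `i`, the new direction `h'_{i+1}` and the parameters `(s, s', t, t')`. -/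
abbrev WalkSample (H F : Type*) (m : ℕ) : Type _ :=
  ((Fin m → H) × (Fin m → H)) × (Fin m → ((Fin m → H) × (F × F × F × F)))

variable {H F : Type*} [Field H] [Field F] {m : ℕ}

/-- The direction `h'_i` of the walk, extended by `0` beyond the last step. -/
def walkDir (ω : WalkSample H F m) : ℕ → Fin m → H := cons0 ω.1.2 fun j => (ω.2 j).1

lemma walkDir_add (ω σ : WalkSample H F m) (j : ℕ) :
    walkDir (ω + σ) j = walkDir ω j + walkDir σ j := by
  cases j with
  | zero => rfl
  | succ j => by_cases hj : j < m <;> simp [walkDir, cons0, pad, hj]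

lemma walkDir_add_eq_self {σ : WalkSample H F m} (hσ : σ.1.2 = 0) (hσdir : ∀ j, (σ.2 j).1 = 0)
    (ω : WalkSample H F m) (j : ℕ) : walkDir (ω + σ) j = walkDir ω j := by
  have hzero : walkDir σ j = 0 := by
    cases j with
    | zero => exact hσ
    | succ j => simp [walkDir, cons0, pad, hσdir]
  rw [walkDir_add, hzero, add_zero]

lemma walkDir_shift (q : Fin m → Fin m → H) (j : Fin m) :
    walkDir (F := F) ((0, pad q 0), fun i => (pad q (i + 1), 0)) j = q j := by
  obtain ⟨_ | j, hj⟩ := j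
  · exact pad_val q ⟨0, hj⟩
  · simp [walkDir, cons0, pad, hj, (Nat.lt_succ_self j).trans hj]

lemma prob_not_linearIndependent_walkDir_le [Fintype H] [Fintype F] :
    prob (fun ω : WalkSample H F m => ¬ LinearIndependent H fun j : Fin m => walkDir ω j) ≤
      2 / Fintype.card H := by
  let shift (q : Fin m → Fin m → H) : WalkSample H F m :=
    ((0, pad q 0), fun i => (pad q (i + 1), 0))
  refine prob_le_of_forall_translate shift fun ω => ?_
  have hdir (q : Fin m → Fin m → H) :
      (fun j : Fin m => walkDir (ω + shift q) j) = (fun j : Fin m => walkDir ω j) + q :=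
    funext fun j => (walkDir_add ω (shift q) j).trans (congrArg _ (walkDir_shift q j))
  simp only [hdir]
  refine (prob_const_add (fun j : Fin m => walkDir ω j)
    fun v : Fin m → Fin m → H => ¬ LinearIndependent H v).trans_le ?_
  exact prob_not_linearIndependent_le (by simp)

variable [Algebra H F]

/-- The point `x_i + a • ĥ_i + b • ι(h'_i)` with parameters `p = (a, b)` of the `i`-th plane of the
walk. -/
def walkPoint (x : Fin m → F) (ω : WalkSample H F m) (i : ℕ) (p : F × F) : Fin m → F :=
  walkX x ω.1.1 (walkDir ω)
      (pad fun j => (ω.2 j).2.1) (pad fun j => (ω.2 j).2.2.1)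
      (pad fun j => (ω.2 j).2.2.2.1) (pad fun j => (ω.2 j).2.2.2.2) i
    + p.1 • walkH ω.1.1 (walkDir ω)
      (pad fun j => (ω.2 j).2.2.2.1) (pad fun j => (ω.2 j).2.2.2.2) i
    + p.2 • iotaV (walkDir ω i)

lemma walkG_eq_comp_walkPoint (f : (Fin m → F) → F) (x : Fin m → F) (ω : WalkSample H F m)
    (i : ℕ) : walkG f x ω.1.1 ω.1.2 ω.2 i = fun p => f (walkPoint x ω i p) :=
  rfl

lemma walkPoint_zero_origin (x : Fin m → F) (ω : WalkSample H F m) :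
    walkPoint x ω 0 (0, 0) = x := by
  simp [walkPoint, walkX]

lemma walkPoint_add_snd (x : Fin m → F) (ω : WalkSample H F m) (i : ℕ) (p : F × F) (b : F) :
    walkPoint x ω i (p + (0, b)) = walkPoint x ω i p + b • iotaV (walkDir ω i) := by
  simp [walkPoint, add_smul, add_assoc]

lemma walkPoint_succ (x : Fin m → F) (ω : WalkSample H F m) (i : Fin m) (p : F × F) :
    walkPoint x ω (i + 1) p =
      walkPoint x ω i (linePoint (ω.2 i).2 p.1) + p.2 • iotaV (walkDir ω (i + 1)) := by
  simp only [walkPoint, walkX, walkH, linePoint, pad_val]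
  simp only [Prod.fst_add, Prod.snd_add, Prod.smul_fst, Prod.smul_snd]
  module

lemma walkPoint_add (x : Fin m → F) (ω : WalkSample H F m) {σ : WalkSample H F m} (hσ : σ.1 = 0)
    (hσdir : ∀ j, (σ.2 j).1 = 0) (b : ℕ → F) {i : ℕ} (hi : i ≤ m)
    (hb : ∀ j : Fin m, j < i → (σ.2 j).2 = (0, b j, 0, 0)) (p : F × F) :
    walkPoint x (ω + σ) i p =
      walkPoint x ω i p + ∑ j ∈ Finset.range i, b j • iotaV (walkDir ω j) := by
  have hdir := walkDir_add_eq_self (congrArg Prod.snd hσ) hσdir ω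
  induction i generalizing p with
  | zero => simp [walkPoint, walkX, walkH, hdir, hσ]
  | succ i ih =>
    have hline (a : F) : linePoint ((ω + σ).2 ⟨i, hi⟩).2 a =
        linePoint (ω.2 ⟨i, hi⟩).2 a + (0, b i) := by
      have hstep := hb ⟨i, hi⟩ i.lt_succ_self
      simp only [linePoint, Prod.snd_add, Pi.add_apply, hstep]
      ext <;> simp [add_right_comm]
    have hi' := ih (Nat.le_of_succ_le hi) fun j hj => hb j (Nat.lt_succ_of_lt hj)
    rw [walkPoint_succ x (ω + σ) ⟨i, hi⟩ p, walkPoint_succ x ω ⟨i, hi⟩ p, hline, hi',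
      walkPoint_add_snd, hdir, Finset.sum_range_succ]
    abel

lemma walkPoint_add_single (x : Fin m → F) (ω : WalkSample H F m) (i : Fin m)
    (q : F × F × F × F) (p : F × F) :
    walkPoint x (ω + (0, Pi.single i (0, q))) i p = walkPoint x ω i p := by
  have hsingle (j : Fin m) : ((Pi.single i (0, q) : Fin m → (Fin m → H) × _) j).1 = 0 := by
    by_cases hj : j = i <;> simp [hj]
  have hbefore (j : Fin m) (hj : (j : ℕ) < i) :
      ((Pi.single i (0, q) : Fin m → (Fin m → H) × _) j).2 = (0, 0, 0, 0) := by
    rw [Pi.single_eq_of_ne (Fin.ne_of_lt hj)]; rfl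
  rw [walkPoint_add x ω rfl hsingle 0 i.is_le' hbefore]
  simp

lemma walkPoint_add_base (x : Fin m → F) (ω : WalkSample H F m) (q : Fin m → F) (p : F × F) :
    walkPoint x (ω + (0, fun j => (0, 0, q j, 0, 0))) m p =
      walkPoint x ω m p + ∑ j : Fin m, q j • iotaV (walkDir ω j) := by
  rw [walkPoint_add x ω rfl (fun _ => rfl) (pad q) le_rfl fun j _ => by simp [pad_val],
    Finset.sum_range]
  simp only [pad_val]

lemma eval_walkPoint_mem_RM2 {d : ℕ} {Q : MvPolynomial (Fin m) F} (hQ : Q.totalDegree ≤ d)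
    (x : Fin m → F) (ω : WalkSample H F m) (i : ℕ) :
    (fun p => MvPolynomial.eval (walkPoint x ω i p) Q) ∈ RM2 F d :=
  eval_plane_mem_RM2 hQ _ _ _

section Rejection

variable [Fintype F] {d : ℕ} {γ : ℝ} {f : (Fin m → F) → F} {Q : MvPolynomial (Fin m) F}
  {x : Fin m → F} {ω : WalkSample H F m}

/-- The event that one of the planes of the walk is at distance at least `γ` from the Reed–Muller
code: the plane `0` in the point-weighted distance, or a later one in the line-weighted distance. -/
def WalkRejects (d : ℕ) (γ : ℝ) (f : (Fin m → F) → F) (x : Fin m → F) (ω : WalkSample H F m) :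
    Prop :=
  γ ≤ pointDist d (walkG f x ω.1.1 ω.1.2 ω.2 0) ∨
    ∃ i : ℕ, 1 ≤ i ∧ i ≤ m ∧ γ ≤ lineDist d (walkG f x ω.1.1 ω.1.2 ω.2 i)

/-- On the `i`-th plane of the walk, some codeword other than the restriction of `Q` is within
distance `ρ` of the restriction of `f`. -/
def HasWrongDecoding (d : ℕ) (ρ : ℝ) (f : (Fin m → F) → F) (Q : MvPolynomial (Fin m) F)
    (x : Fin m → F) (ω : WalkSample H F m) (i : ℕ) : Prop :=
  ∃ P, IsWrongDecoding d ρ (fun p => f (walkPoint x ω i p))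
    (fun p => MvPolynomial.eval (walkPoint x ω i p) Q) P

/-- The line along which step `i` of the walk leaves the `i`-th plane hides a wrong decoding of `f`
relative to `Q`. -/
def IsHidingStep (d : ℕ) (ρ : ℝ) (f : (Fin m → F) → F) (Q : MvPolynomial (Fin m) F)
    (x : Fin m → F) (ω : WalkSample H F m) (i : Fin m) : Prop :=
  IsHidingLine d ρ (fun p => f (walkPoint x ω i p))
    (fun p => MvPolynomial.eval (walkPoint x ω i p) Q) (ω.2 i).2

lemma hasWrongDecoding_zero (hγ : γ ≤ 1 / 2) (hx : f x ≠ MvPolynomial.eval x Q)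
    (hpoint : pointDist d (fun p => f (walkPoint x ω 0 p)) < γ) :
    HasWrongDecoding d (2 * γ) f Q x ω 0 := by
  obtain ⟨P, hP, hclose, horigin⟩ := exists_close_of_pointDist_lt hγ hpoint
  refine ⟨P, hP, hclose, fun hPQ => hx ?_⟩
  simpa only [hPQ, walkPoint_zero_origin] using horigin

lemma HasWrongDecoding.succ {i : Fin m} (hi : HasWrongDecoding d (2 * γ) f Q x ω i)
    (hstep : ¬ IsHidingStep d (2 * γ) f Q x ω i)
    (hline : lineDist d (fun p => f (walkPoint x ω (i + 1) p)) < γ) :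
    HasWrongDecoding d (2 * γ) f Q x ω (i + 1) := by
  obtain ⟨P, hP⟩ := hi
  obtain ⟨P', hP', hclose, haxis⟩ := exists_close_of_lineDist_lt hline
  have hpoint (a : F) : walkPoint x ω (i + 1) (a, 0) = walkPoint x ω i (linePoint (ω.2 i).2 a) := by
    rw [walkPoint_succ, zero_smul, add_zero]
  refine ⟨P', hP', hclose, hP.ne_of_not_isHidingLine hstep (g' := fun p =>
    f (walkPoint x ω (i + 1) p)) (fun a => ?_) (fun a => ?_) hP' haxis⟩ <;> simp only [hpoint]

lemma rmDist_sub_le_prob_walkPoint (hγ : γ ≤ 1 / 2) (hQ : Q.totalDegree ≤ d)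
    (hx : f x ≠ MvPolynomial.eval x Q) (hrej : ¬ WalkRejects d γ f x ω)
    (hstep : ∀ i, ¬ IsHidingStep d (2 * γ) f Q x ω i) :
    rmDist F d - 2 * γ ≤
      prob (fun p => f (walkPoint x ω m p) ≠ MvPolynomial.eval (walkPoint x ω m p) Q) := by
  simp only [WalkRejects, walkG_eq_comp_walkPoint, not_or, not_exists, not_and, not_le] at hrej
  obtain ⟨hpoint, hline⟩ := hrej
  have hwrong (i : ℕ) (hi : i ≤ m) : HasWrongDecoding d (2 * γ) f Q x ω i := by
    induction i with
    | zero => exact hasWrongDecoding_zero hγ hx hpoint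
    | succ i ih =>
      exact HasWrongDecoding.succ (i := ⟨i, hi⟩) (ih (Nat.le_of_succ_le hi)) (hstep ⟨i, hi⟩)
        (hline (i + 1) (Nat.le_add_left 1 i) hi)
  obtain ⟨P, hP⟩ := hwrong m le_rfl
  exact hP.rmDist_sub_le (eval_walkPoint_mem_RM2 hQ x ω m)

end Rejection

variable [Fintype H] [Fintype F] {d : ℕ}

lemma prob_isHidingStep_le {ρ : ℝ} (f : (Fin m → F) → F) {Q : MvPolynomial (Fin m) F}
    (hQ : Q.totalDegree ≤ d) (hδ : 2 / 3 ≤ rmDist F d) (hρ : ρ ≤ rmDist F d / 4)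
    (x : Fin m → F) (i : Fin m) :
    prob (fun ω : WalkSample H F m => IsHidingStep d ρ f Q x ω i) ≤ 2 / Fintype.card F := by
  let shift (q : F × F × F × F) : WalkSample H F m := (0, Pi.single i (0, q))
  refine prob_le_of_forall_translate shift fun ω => ?_
  have hplane (q : F × F × F × F) (p : F × F) :
      walkPoint x (ω + shift q) i p = walkPoint x ω i p := walkPoint_add_single x ω i q p
  have hline (q : F × F × F × F) : ((ω + shift q).2 i).2 = (ω.2 i).2 + q := by
    simp only [shift, Prod.snd_add, Pi.add_apply, Pi.single_eq_same]
  simp only [IsHidingStep, hplane, hline]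
  refine (prob_const_add (ω.2 i).2 (IsHidingLine d ρ (fun p => f (walkPoint x ω i p))
    fun p => MvPolynomial.eval (walkPoint x ω i p) Q)).trans_le ?_
  exact prob_isHidingLine_le (eval_walkPoint_mem_RM2 hQ x ω i) hδ hρ

-- Once the directions are independent, the coefficients `s'` make the point uniform.
lemma prob_linearIndependent_and_walkPoint_le (E : (Fin m → F) → Prop) (x : Fin m → F)
    (p : F × F) :
    prob (fun ω : WalkSample H F m =>
      LinearIndependent H (fun j : Fin m => walkDir ω j) ∧ E (walkPoint x ω m p)) ≤ prob E := by
  let shift (q : Fin m → F) : WalkSample H F m := (0, fun j => (0, 0, q j, 0, 0))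
  refine prob_le_of_forall_translate shift fun ω => ?_
  have hdir (q : Fin m → F) (j : Fin m) : walkDir (ω + shift q) j = walkDir ω j :=
    walkDir_add_eq_self rfl (fun _ => rfl) ω j
  simp only [shift, walkPoint_add_base, hdir]
  by_cases hli : LinearIndependent H fun j : Fin m => walkDir ω j
  · simp only [hli, true_and]
    exact (prob_comp_bijective ((Equiv.addLeft (walkPoint x ω m p)).bijective.comp
      (bijective_sum_smul_iotaV hli)) E).le
  · simp only [hli, false_and, prob_false]
    exact prob_nonneg E

lemma prob_walkPoint_le (E : (Fin m → F) → Prop) (x : Fin m → F) (p : F × F) :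
    prob (fun ω : WalkSample H F m => E (walkPoint x ω m p)) ≤ prob E + 2 / Fintype.card H :=
  calc prob (fun ω : WalkSample H F m => E (walkPoint x ω m p))
      ≤ prob (fun ω : WalkSample H F m =>
          (LinearIndependent H (fun j : Fin m => walkDir ω j) ∧ E (walkPoint x ω m p)) ∨
            ¬ LinearIndependent H fun j : Fin m => walkDir ω j) :=
        prob_mono fun ω hω => by tauto
    _ ≤ prob E + 2 / Fintype.card H :=
        (prob_or_le _ _).trans <| add_le_add (prob_linearIndependent_and_walkPoint_le E x p)
          prob_not_linearIndependent_walkDir_le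

lemma prob_le_prob_walkPoint_le (E : (Fin m → F) → Prop) (x : Fin m → F) {r : ℝ} (hr : 0 < r) :
    prob (fun ω : WalkSample H F m => r ≤ prob (fun p => E (walkPoint x ω m p))) ≤
      (prob E + 2 / Fintype.card H) / r := by
  refine (prob_le_expect_div (fun ω => prob_nonneg _) hr).trans ?_
  gcongr
  rw [expect_prob_comm]
  exact Finset.expect_le Finset.univ_nonempty fun p _ => prob_walkPoint_le E x p

end Walk

lemma one_sub_two_mul_pow_le {y : ℝ} (hy : 0 ≤ y) {k : ℕ} (hk : k * (2 * y) ≤ 1) :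
    (1 - 2 * y) ^ k ≤ 1 - k * y := by
  rcases Nat.eq_zero_or_pos k with rfl | hk1
  · simp
  have hk1 : (1 : ℝ) ≤ k := by exact_mod_cast hk1
  have hy1 : 2 * y ≤ 1 := (le_mul_of_one_le_left (by linarith) hk1).trans hk
  have hBernoulli : 1 + k * (2 * y) ≤ (1 + 2 * y) ^ k := one_add_mul_le_pow (by linarith) k
  have hpow : 0 ≤ (1 - 2 * y) ^ k := pow_nonneg (by linarith) k
  have hlower : (1 - 2 * y) ^ k * (1 + k * (2 * y)) ≤ 1 :=
    calc (1 - 2 * y) ^ k * (1 + k * (2 * y))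
        ≤ (1 - 2 * y) ^ k * (1 + 2 * y) ^ k := mul_le_mul_of_nonneg_left hBernoulli hpow
      _ = (1 - (2 * y) ^ 2) ^ k := by rw [← mul_pow]; ring
      _ ≤ 1 := pow_le_one₀ (by nlinarith) (by nlinarith)
  have hky : 0 ≤ k * y := by positivity
  have hupper : 1 ≤ (1 - k * y) * (1 + k * (2 * y)) := by nlinarith
  exact le_of_mul_le_mul_right (hlower.trans hupper) (by linarith)

lemma one_sub_four_div_pow_le {k n : ℕ} (hkn : 4 * k ≤ n) :
    (1 - 4 / (n : ℝ)) ^ k ≤ 1 - k * (2 / (n : ℝ)) := by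
  have hk : k * (2 * (2 / (n : ℝ))) ≤ 1 :=
    calc k * (2 * (2 / (n : ℝ))) = (4 * k : ℕ) / n := by push_cast; ring
      _ ≤ 1 := div_le_one_of_le₀ (by exact_mod_cast hkn) n.cast_nonneg
  calc (1 - 4 / (n : ℝ)) ^ k = (1 - 2 * (2 / (n : ℝ))) ^ k := by ring
    _ ≤ 1 - k * (2 / (n : ℝ)) := one_sub_two_mul_pow_le (by positivity) hk

theorem ctrw_robust_soundness_general (H : Type*) {F : Type*} [Field H] [Fintype H] [Field F]
    [Fintype F] [Algebra H F] {m d : ℕ} (hd : 3 * d ≤ Fintype.card F) {γ : ℝ}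
    (hγ : γ ≤ rmDist F d / 8) (f : (Fin m → F) → F) {Q : MvPolynomial (Fin m) F}
    (hQ : Q.totalDegree ≤ d) {x : Fin m → F} (hx : f x ≠ MvPolynomial.eval x Q) :
    1 - m * (2 / (Fintype.card F : ℝ)) -
        (prob (fun y => f y ≠ MvPolynomial.eval y Q) + 2 / Fintype.card H)
          / (rmDist F d - 2 * γ) ≤
      prob (fun ω : WalkSample H F m => WalkRejects d γ f x ω) := by
  have hδ : 2 / 3 ≤ rmDist F d := two_thirds_le_rmDist hd
  have hδ1 : rmDist F d ≤ 1 := rmDist_le_one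
  let HasHidingStep : WalkSample H F m → Prop := fun ω => ∃ i, IsHidingStep d (2 * γ) f Q x ω i
  let IsLastPlaneFar : WalkSample H F m → Prop := fun ω => rmDist F d - 2 * γ ≤
    prob (fun p => f (walkPoint x ω m p) ≠ MvPolynomial.eval (walkPoint x ω m p) Q)
  have hcover (ω : WalkSample H F m) (hrej : ¬ WalkRejects d γ f x ω) :
      HasHidingStep ω ∨ IsLastPlaneFar ω :=
    or_iff_not_imp_left.2 fun hsteps =>
      rmDist_sub_le_prob_walkPoint (by linarith) hQ hx hrej (not_exists.1 hsteps)
  have hunion : prob (fun ω : WalkSample H F m => ¬ WalkRejects d γ f x ω) ≤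
      prob HasHidingStep + prob IsLastPlaneFar :=
    (prob_mono hcover).trans (prob_or_le _ _)
  have hsteps : prob HasHidingStep ≤ m * (2 / (Fintype.card F : ℝ)) :=
    (prob_exists_le _).trans <| (Finset.sum_le_card_nsmul _ _ _ fun i _ =>
      prob_isHidingStep_le f hQ hδ (by linarith) x i).trans_eq (by simp)
  have hlast : prob IsLastPlaneFar ≤ (prob (fun y => f y ≠ MvPolynomial.eval y Q) +
      2 / Fintype.card H) / (rmDist F d - 2 * γ) :=
    prob_le_prob_walkPoint_le (fun y => f y ≠ MvPolynomial.eval y Q) x (by linarith)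
  linarith [prob_add_prob_not fun ω : WalkSample H F m => WalkRejects d γ f x ω]

/-- **Theorem 4.2 (robust soundness of the `H`-plane-line consistency test).**
Let `d, m ≥ 2`, `H` a finite field, `F` an extension of degree `m` with `|F| ≥ 2md`,
`n = |F|`, `δ = 1 − d/n`, `0 ≤ τ ≤ δ/2` and `0 < γ ≤ δ/8`.  Suppose `f : F^m → F`
agrees with the evaluation of a degree-`≤ d` polynomial `Q*` except on at most `τ·n^m`
points, and `f(x) ≠ Q*(x)`.  Run the `m`-step `H`-plane-line random walk from `x`.
Then with probability at least `(1 − 4/n)^m − (τ + 2/|H|)/(δ − 2γ)` over the sample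
space `(H^m)² × ((H^m) × F⁴)^m`, either the point-weighted distance of `g₀` from the
bivariate Reed–Muller code is at least `γ`, or for some `i ∈ {1, …, m}` the
line-weighted distance of `g_i` from the bivariate Reed–Muller code is at least `γ`. -/
theorem ctrw_robust_soundness (H F : Type*) [Field H] [Fintype H] [Field F] [Fintype F]
    [Algebra H F] (m d : ℕ) (hm : 2 ≤ m) (hd : 2 ≤ d)
    (hrank : Module.finrank H F = m)
    (n : ℕ) (hn : n = Fintype.card F) (hnbig : 2 * m * d ≤ n)
    (δ : ℝ) (hδ : δ = 1 - (d : ℝ) / (n : ℝ))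
    (τ γ : ℝ) (hτ0 : 0 ≤ τ) (hτ : τ ≤ δ / 2) (hγ0 : 0 < γ) (hγ : γ ≤ δ / 8)
    (f : (Fin m → F) → F) (Qstar : MvPolynomial (Fin m) F) (hQd : Qstar.totalDegree ≤ d)
    (hclose : ((Finset.univ.filter
        (fun y : Fin m → F => f y ≠ MvPolynomial.eval y Qstar)).card : ℝ) ≤ τ * (n : ℝ) ^ m)
    (x : Fin m → F) (hx : f x ≠ MvPolynomial.eval x Qstar) :
    (((1 : ℝ) - 4 / (n : ℝ)) ^ m - (τ + 2 / (Fintype.card H : ℝ)) / (δ - 2 * γ))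
        * (Fintype.card
            (((Fin m → H) × (Fin m → H)) × (Fin m → ((Fin m → H) × (F × F × F × F)))) : ℝ)
      ≤ ((Finset.univ.filter
          (fun ω : ((Fin m → H) × (Fin m → H)) × (Fin m → ((Fin m → H) × (F × F × F × F))) =>
            (γ ≤ sInf {r : ℝ | ∃ g ∈ RM2 F d,
                r = (1 / 2) * (if walkG f x ω.1.1 ω.1.2 ω.2 0 (0, 0) ≠ g (0, 0)
                                then (1 : ℝ) else 0)
                  + ((Finset.univ.filter (fun p : F × F =>
                        walkG f x ω.1.1 ω.1.2 ω.2 0 p ≠ g p)).card : ℝ) / (2 * (n : ℝ) ^ 2)})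
            ∨ ∃ i : ℕ, 1 ≤ i ∧ i ≤ m ∧
                γ ≤ sInf {r : ℝ | ∃ g ∈ RM2 F d,
                  r = ((Finset.univ.filter (fun a : F =>
                          walkG f x ω.1.1 ω.1.2 ω.2 i (a, 0) ≠ g (a, 0))).card : ℝ)
                        / (2 * (n : ℝ))
                    + ((Finset.univ.filter (fun p : F × F =>
                          walkG f x ω.1.1 ω.1.2 ω.2 i p ≠ g p)).card : ℝ)
                        / (2 * (n : ℝ) ^ 2)})).card : ℝ) := by
  subst hn
  obtain rfl : δ = rmDist F d := hδ
  have h3d : 3 * d ≤ Fintype.card F := by nlinarith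
  have h4m : 4 * m ≤ Fintype.card F := by nlinarith
  have hgap : 0 < rmDist F d - 2 * γ := by linarith [two_thirds_le_rmDist h3d]
  have hfar : prob (fun y => f y ≠ MvPolynomial.eval y Qstar) ≤ τ := by
    rw [prob_eq_card_div_card, div_le_iff₀ (by positivity)]
    simpa using hclose
  rw [card_filter_eq_prob_mul]
  refine mul_le_mul_of_nonneg_right ?_ (Nat.cast_nonneg _)
  refine le_trans ?_ (ctrw_robust_soundness_general H h3d hγ f hQd hx)
  gcongr
  exact one_sub_four_div_pow_le h4m
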